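/- arXiv:2303.00514 — 3 statements merged into one kernel-verified Lean document; each statement's English description precedes it below -/
import Mathlib

section
/- Let f : X → X and g : Y → Y be maps on compact metric spaces (X,d_X) and (Y,d_Y), respectively, and assume that (X,f) is a factor of (Y,g) with a Hölder continuous factor map π : Y → X (i.e., π is surjective, Hölder continuous, and satisfies π∘g = f∘π). If (Y,g) has the Bressaud–Quas shadowing property, then so does (X,f). -/
/-!
Given a compact `f`-invariant set `K`, the preimage `π ⁻¹' K` is nonempty, compact and
`g`-invariant. The shadowing property of `g` at scale `δ = (ε / (C + 1)) ^ (1 / β)` yields a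
periodic orbit near `π ⁻¹' K`. By the Hölder bound its image lies within `C * δ ^ β < ε` of `K`, and
this image is a periodic orbit of `f` of no larger period
(`exists_periodicOrbit_of_iterate_eq`). With exponent `κ * β / 2` upstairs, the period is
less than `((C + 1) / ε) ^ (κ / 2)`, which is at most `(1 / ε) ^ κ` as soon as
`ε ≤ 1 / (C + 1)`: half of the exponent absorbs the constant.
-/

open Metric Set

noncomputable section

namespace ErgOpt

/-- `O` is a periodic orbit of `T`: it is the orbit `{x, T x, …, T^[p-1] x}` of a point `x`
with `T^[p] x = x`, where the period `p` equals `O.card`. -/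
def IsPeriodicOrbit {X : Type*} (T : X → X) (O : Finset X) : Prop :=
  ∃ x ∈ O, T^[O.card] x = x ∧ ∀ y : X, y ∈ O ↔ ∃ i < O.card, T^[i] x = y

/-- The Bressaud–Quas shadowing property: for every nonempty compact forward-invariant
set `K` and every `κ > 0` there is `ε₀ > 0` such that for each `ε ∈ (0, ε₀)` there is a
periodic orbit of period `p < (1/ε)^κ` contained in the open `ε`-neighborhood of `K`. -/
def BQShadowing {X : Type*} [MetricSpace X] (T : X → X) : Prop :=
  ∀ K : Set X, K.Nonempty → IsCompact K → T '' K ⊆ K →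
    ∀ κ : ℝ, 0 < κ →
      ∃ ε₀ : ℝ, 0 < ε₀ ∧ ∀ ε : ℝ, 0 < ε → ε < ε₀ →
        ∃ O : Finset X, IsPeriodicOrbit T O ∧ (O.card : ℝ) < (1 / ε) ^ κ ∧
          ∀ y ∈ O, infDist y K < ε

end ErgOpt

open ErgOpt

/-- A point `x` with `f^[n] x = x`, `n > 0`, has a periodic orbit in the sense of
`IsPeriodicOrbit`. Its period is the minimal period of `x`, which is at most `n`. -/
lemma exists_periodicOrbit_of_iterate_eq {X : Type*} (f : X → X) (x : X) (n : ℕ) (hn : 0 < n)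
    (hx : f^[n] x = x) :
    ∃ O : Finset X, IsPeriodicOrbit f O ∧ O.card ≤ n ∧ ∀ y ∈ O, ∃ i < n, f^[i] x = y := by
  classical
  have hper : Function.IsPeriodicPt f n x := hx
  have hle : Function.minimalPeriod f x ≤ n := hper.minimalPeriod_le hn
  have hpos : 0 < Function.minimalPeriod f x := hper.minimalPeriod_pos hn
  have hcard : ((Finset.range (Function.minimalPeriod f x)).image (fun i => f^[i] x)).card
      = Function.minimalPeriod f x := by
    rw [Finset.card_image_of_injOn, Finset.card_range]
    intro i hi j hj hij
    exact Function.iterate_injOn_Iio_minimalPeriod (by simpa using hi) (by simpa using hj) hij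
  refine ⟨(Finset.range (Function.minimalPeriod f x)).image (fun i => f^[i] x),
    ⟨x, ?_, ?_, ?_⟩, ?_, ?_⟩
  · exact Finset.mem_image.2 ⟨0, Finset.mem_range.2 hpos, rfl⟩
  · rw [hcard]
    exact Function.iterate_minimalPeriod
  · intro y
    rw [hcard]
    simp
  · rw [hcard]
    exact hle
  · intro y hy
    obtain ⟨i, hi, rfl⟩ := Finset.mem_image.1 hy
    exact ⟨i, (Finset.mem_range.1 hi).trans_le hle, rfl⟩

/-- Let `f : X → X` and `g : Y → Y` be maps on compact metric spaces,
and assume `(X, f)` is a factor of `(Y, g)` with a Hölder continuous factor map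
`π : Y → X` (surjective, Hölder continuous, `π ∘ g = f ∘ π`). If `(Y, g)` has the
Bressaud–Quas shadowing property, then so does `(X, f)`. -/
theorem bq_shadowing_of_factor
    {X Y : Type*} [MetricSpace X] [CompactSpace X] [MetricSpace Y] [CompactSpace Y]
    (f : X → X) (g : Y → Y) (π : Y → X)
    (hsurj : Function.Surjective π)
    (hHolder : ∃ β ∈ Set.Ioc (0 : ℝ) 1, ∃ C : ℝ, 0 ≤ C ∧
      ∀ x y : Y, dist (π x) (π y) ≤ C * dist x y ^ β)
    (hsemi : π ∘ g = f ∘ π)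
    (hBQ : BQShadowing g) :
    BQShadowing f := by
  obtain ⟨β, ⟨hβ, -⟩, C, hC, hπ⟩ := hHolder
  have hC1 : 0 < C + 1 := by linarith
  have hcont : Continuous π := by
    refine continuous_iff_continuousAt.2 fun a => ?_
    refine tendsto_iff_dist_tendsto_zero.2 (squeeze_zero (fun _ => dist_nonneg)
      (fun b => hπ b a) ?_)
    have h : Continuous fun b => C * dist b a ^ β :=
      continuous_const.mul ((continuous_id.dist continuous_const).rpow_const
        fun _ => Or.inr hβ.le)
    have h0 := h.tendsto a
    simpa [Real.zero_rpow hβ.ne'] using h0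
  have hiter : ∀ (i : ℕ) (y : Y), π (g^[i] y) = f^[i] (π y) := fun i y =>
    Function.Semiconj.iterate_right (f := π) (fun z => congrFun hsemi z) i y
  intro K hKne hK hinv κ hκ
  have hKne' : (π ⁻¹' K).Nonempty := hKne.preimage hsurj
  have hK' : IsCompact (π ⁻¹' K) := (hK.isClosed.preimage hcont).isCompact
  have hinv' : g '' (π ⁻¹' K) ⊆ π ⁻¹' K := by
    rintro _ ⟨y, hy, rfl⟩
    have h : π (g y) = f (π y) := hiter 1 y
    exact mem_preimage.2 (h ▸ hinv ⟨π y, hy, rfl⟩)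
  obtain ⟨ε₁, hε₁, H⟩ := hBQ _ hKne' hK' hinv' (κ * β / 2) (by positivity)
  refine ⟨min (1 / (C + 1)) ((C + 1) * ε₁ ^ β), by positivity, fun ε hε hlt => ?_⟩
  have hlt1 : ε < 1 / (C + 1) := hlt.trans_le (min_le_left _ _)
  have hlt2 : ε < (C + 1) * ε₁ ^ β := hlt.trans_le (min_le_right _ _)
  have hq : 0 < ε / (C + 1) := by positivity
  set δ := (ε / (C + 1)) ^ (1 / β) with hδ
  have hδ0 : 0 < δ := Real.rpow_pos_of_pos hq _
  have hδβ : δ ^ β = ε / (C + 1) := by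
    rw [hδ, ← Real.rpow_mul hq.le, one_div_mul_cancel hβ.ne', Real.rpow_one]
  have hδ1 : δ < ε₁ := by
    rw [← Real.rpow_lt_rpow_iff hδ0.le hε₁.le hβ, hδβ, div_lt_iff₀ hC1]
    linarith
  obtain ⟨O, ⟨y, hyO, hyper, hO⟩, hcard, hnear⟩ := H δ hδ0 hδ1
  obtain ⟨P, hP, hPcard, hPmem⟩ := exists_periodicOrbit_of_iterate_eq f (π y) O.card
    (Finset.card_pos.2 ⟨y, hyO⟩) (by rw [← hiter, hyper])
  refine ⟨P, hP, ?_, fun x hx => ?_⟩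
  · have hPO : (P.card : ℝ) ≤ O.card := by exact_mod_cast hPcard
    refine (hPO.trans_lt hcard).trans_le ?_
    have hpow : (1 / δ) ^ (κ * β / 2) = ((C + 1) / ε) ^ (κ / 2) := by
      rw [show κ * β / 2 = β * (κ / 2) by ring, Real.rpow_mul (by positivity),
        Real.div_rpow zero_le_one hδ0.le, Real.one_rpow, hδβ, one_div_div]
    have hsq : (1 / ε) ^ κ = (1 / ε * (1 / ε)) ^ (κ / 2) := by
      rw [Real.mul_rpow (by positivity) (by positivity), ← Real.rpow_add (by positivity),
        add_halves]
    rw [hpow, hsq]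
    refine Real.rpow_le_rpow (by positivity) ?_ (by positivity)
    have hCε : C + 1 ≤ 1 / ε := by
      rw [le_div_iff₀ hε]
      rw [lt_div_iff₀ hC1] at hlt1
      linarith
    calc (C + 1) / ε = (C + 1) * (1 / ε) := by ring
      _ ≤ 1 / ε * (1 / ε) := by gcongr
  · obtain ⟨i, hi, rfl⟩ := hPmem x hx
    obtain ⟨z, hz, hdist⟩ := (infDist_lt_iff hKne').1 (hnear (g^[i] y) ((hO _).2 ⟨i, hi, rfl⟩))
    rw [← hiter]
    calc infDist (π (g^[i] y)) K ≤ dist (π (g^[i] y)) (π z) := infDist_le_dist_of_mem hz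
      _ ≤ C * dist (g^[i] y) z ^ β := hπ _ _
      _ ≤ C * δ ^ β := by gcongr
      _ = C * (ε / (C + 1)) := by rw [hδβ]
      _ < (C + 1) * (ε / (C + 1)) := by gcongr; linarith
      _ = ε := mul_div_cancel₀ ε hC1.ne'
end
end

section
/- Let f : X → X be a map on a compact metric space (X,d) which is Lipschitz with respect to d, let n ∈ ℕ, and set F := f^n. Then (X,f) has the Bressaud–Quas shadowing property if and only if (X,F) has the Bressaud–Quas shadowing property. -/
/-!
Write `F = f^[n]`. Since `f` is Lipschitz, there is `M ≥ 1` such that all `f^[j]` with `j ≤ n`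
are `M`-Lipschitz (`exists_common_lipschitz`).

*From `F` to `f`.* An `f`-invariant set `K` is also `F`-invariant. An `F`-periodic orbit in the
`ε / M`-neighborhood of `K`, of period less than `(M / ε)^(κ / 2)`, generates an `f`-periodic orbit
in the `ε`-neighborhood whose period is at most `n` times larger; the factor `n M^(κ / 2)` is
absorbed by `(1 / ε)^(κ / 2)` for small `ε`.

*From `f` to `F`.* Shrinking `K` only strengthens the conclusion, so `K` may be taken minimal among
the nonempty compact `F`-invariant sets (`exists_minimal_invariant`). The set `⋃ j < n, f^[j] '' K`
is compact and `f`-invariant, hence is shadowed by an `f`-periodic orbit `O`. By minimality each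
`f^[j] '' K` is either contained in `K` or disjoint from it (`minimal_image_dichotomy`), so for
small `ε` a point of `O` which is `M ε`-close to `K` must be `ε`-close to `K`. Therefore
the points of `O` that are `ε`-close to `K` are preserved by `F`; there is at least one, since some
iterate of any point of `O` lands `M ε`-close to `K`. The `F`-orbit of such a point is periodic with
period at most `O.card`.
-/

open Metric Set

noncomputable section

namespace ErgOpt

lemma IsPeriodicOrbit.card_pos {X : Type*} {T : X → X} {O : Finset X}
    (h : IsPeriodicOrbit T O) : 0 < O.card := by
  obtain ⟨x, hx, -⟩ := h
  exact Finset.card_pos.mpr ⟨x, hx⟩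

lemma IsPeriodicOrbit.iterate_card {X : Type*} {T : X → X} {O : Finset X}
    (h : IsPeriodicOrbit T O) {y : X} (hy : y ∈ O) : T^[O.card] y = y := by
  obtain ⟨x, -, hp, hO⟩ := h
  obtain ⟨i, -, rfl⟩ := (hO y).1 hy
  rw [← Function.iterate_add_apply, add_comm, Function.iterate_add_apply, hp]

lemma IsPeriodicOrbit.iterate_mem {X : Type*} {T : X → X} {O : Finset X}
    (h : IsPeriodicOrbit T O) {y : X} (hy : y ∈ O) (k : ℕ) : T^[k] y ∈ O := by
  have hpos := h.card_pos
  obtain ⟨x, -, hp, hO⟩ := h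
  obtain ⟨i, -, rfl⟩ := (hO y).1 hy
  rw [← Function.iterate_add_apply]
  refine (hO _).2 ⟨(k + i) % O.card, Nat.mod_lt _ hpos, ?_⟩
  exact Function.IsPeriodicPt.iterate_mod_apply hp _

/-- A point fixed by `T^[p]` generates a periodic orbit; its period can be smaller than `p`. -/
lemma exists_periodicOrbit {X : Type*} {T : X → X} {x : X} {p : ℕ} (hp : 0 < p)
    (h : T^[p] x = x) :
    ∃ O : Finset X, IsPeriodicOrbit T O ∧ O.card ≤ p ∧ ∀ y ∈ O, ∃ i, i < p ∧ T^[i] x = y := by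
  classical
  have hper : Function.IsPeriodicPt T p x := h
  have hle := hper.minimalPeriod_le hp
  have hpos := hper.minimalPeriod_pos hp
  have hcard : ((Finset.range (Function.minimalPeriod T x)).image fun i => T^[i] x).card
      = Function.minimalPeriod T x := by
    rw [Finset.card_image_of_injOn, Finset.card_range]
    intro a ha b hb hab
    simp only [Finset.coe_range, Set.mem_Iio] at ha hb
    exact (Function.iterate_eq_iterate_iff_of_lt_minimalPeriod ha hb).1 hab
  refine ⟨(Finset.range (Function.minimalPeriod T x)).image fun i => T^[i] x, ?_, ?_, ?_⟩
  · refine ⟨x, Finset.mem_image.2 ⟨0, Finset.mem_range.2 hpos, rfl⟩, ?_, ?_⟩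
    · rw [hcard]
      exact Function.iterate_minimalPeriod
    · intro y
      rw [hcard]
      simp
  · rw [hcard]
    exact hle
  · intro y hy
    simp only [Finset.mem_image, Finset.mem_range] at hy
    obtain ⟨i, hi, rfl⟩ := hy
    exact ⟨i, hi.trans_le hle, rfl⟩

lemma exists_common_lipschitz {X : Type*} [MetricSpace X] {f : X → X}
    (hLip : ∃ C : NNReal, LipschitzWith C f) (n : ℕ) :
    ∃ M : ℝ, 1 ≤ M ∧ ∀ j ≤ n, ∀ x y : X, dist (f^[j] x) (f^[j] y) ≤ M * dist x y := by
  obtain ⟨C, hC⟩ := hLip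
  have hC' : LipschitzWith (max 1 C) f := hC.weaken (le_max_right _ _)
  have h1 : (1 : ℝ) ≤ ((max 1 C : NNReal) : ℝ) := by exact_mod_cast le_max_left 1 C
  refine ⟨((max 1 C : NNReal) : ℝ) ^ n, one_le_pow₀ h1, fun j hj x y => ?_⟩
  have h := (hC'.iterate j).dist_le_mul x y
  rw [NNReal.coe_pow] at h
  exact h.trans (mul_le_mul_of_nonneg_right (pow_le_pow_right₀ h1 hj) dist_nonneg)

/-- Zorn's lemma with Cantor's intersection theorem. -/
lemma exists_minimal_invariant {X : Type*} [MetricSpace X] [CompactSpace X] (F : X → X)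
    {K : Set X} (hne : K.Nonempty) (hK : IsCompact K) (hinv : MapsTo F K K) :
    ∃ L ⊆ K, L.Nonempty ∧ IsCompact L ∧ MapsTo F L L ∧
      ∀ L' ⊆ L, L'.Nonempty → IsClosed L' → MapsTo F L' L' → L' = L := by
  obtain ⟨L, hLK, hL⟩ := zorn_superset_nonempty
    {L : Set X | L.Nonempty ∧ IsClosed L ∧ MapsTo F L L} (fun c hc hchain hcne => by
      refine ⟨⋂₀ c, ⟨?_, isClosed_sInter fun s hs => (hc hs).2.1, ?_⟩,
        fun s hs => sInter_subset_of_mem hs⟩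
      · have : Nonempty c := hcne.to_subtype
        rw [sInter_eq_iInter]
        exact IsCompact.nonempty_iInter_of_directed_nonempty_isCompact_isClosed _
          (IsChain.directedOn (r := fun s t : Set X => t ⊆ s) hchain.symm).directed_val
          (fun s => (hc s.2).1) (fun s => (hc s.2).2.1.isCompact) (fun s => (hc s.2).2.1)
      · intro x hx s hs
        exact (hc hs).2.2 (hx s hs)) K ⟨hne, hK.isClosed, hinv⟩
  refine ⟨L, hLK, hL.prop.1, hL.prop.2.1.isCompact, hL.prop.2.2, fun L' hsub h1 h2 h3 => ?_⟩
  exact hsub.antisymm (hL.le_of_le ⟨h1, h2, h3⟩ hsub)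

/-- If `f^[j] '' K` meets `K`, then `K ∩ f^[j] ⁻¹' K` is a nonempty closed `f^[n]`-invariant subset
of the minimal set `K`, hence is all of `K`. -/
lemma minimal_image_dichotomy {X : Type*} [MetricSpace X] {f : X → X} (hf : Continuous f)
    {n : ℕ} {K : Set X} (hK : IsCompact K) (hinv : MapsTo f^[n] K K)
    (hmin : ∀ L' ⊆ K, L'.Nonempty → IsClosed L' → MapsTo f^[n] L' L' → L' = K) (j : ℕ) :
    f^[j] '' K ⊆ K ∨ Disjoint K (f^[j] '' K) := by
  by_cases hd : Disjoint K (f^[j] '' K)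
  · exact Or.inr hd
  left
  obtain ⟨y, hy, x, hx, rfl⟩ := Set.not_disjoint_iff.1 hd
  have h := hmin (K ∩ f^[j] ⁻¹' K) inter_subset_left ⟨x, hx, hy⟩
    (hK.isClosed.inter (hK.isClosed.preimage (hf.iterate j))) (fun z hz => ⟨hinv hz.1, by
      rw [mem_preimage, ← Function.iterate_add_apply, add_comm, Function.iterate_add_apply]
      exact hinv hz.2⟩)
  rintro _ ⟨z, hz, rfl⟩
  rw [← h] at hz
  exact hz.2

lemma bqShadowing_of_iterate {X : Type*} [MetricSpace X] {f : X → X}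
    (hLip : ∃ C : NNReal, LipschitzWith C f) {n : ℕ} (hn : 0 < n)
    (h : BQShadowing (f^[n])) : BQShadowing f := by
  intro K hne hK hinv κ hκ
  obtain ⟨M, hM, hLM⟩ := exists_common_lipschitz hLip n
  have hM0 : 0 < M := one_pos.trans_le hM
  have hmaps : MapsTo f K K := mapsTo_iff_image_subset.2 hinv
  obtain ⟨ε₁, hε₁, hε⟩ := h K hne hK (hmaps.iterate n).image_subset (κ / 2) (half_pos hκ)
  set A : ℝ := n * M ^ (κ / 2) with hA
  have hn' : (0 : ℝ) < n := by exact_mod_cast hn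
  have hA0 : 0 < A := mul_pos hn' (Real.rpow_pos_of_pos hM0 _)
  -- The second bound on `ε` is equivalent to `A < (1 / ε) ^ (κ / 2)`.
  refine ⟨min ε₁ (1 / A ^ (2 / κ)), lt_min hε₁ (by positivity), fun ε h0 hlt => ?_⟩
  obtain ⟨hlt₁, hlt₂⟩ := lt_min_iff.1 hlt
  have hAε : A < (1 / ε) ^ (κ / 2) := by
    have h1 : A ^ (2 / κ) < 1 / ε := (lt_one_div h0 (by positivity)).1 hlt₂
    have h2 := Real.rpow_lt_rpow (by positivity) h1 (half_pos hκ)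
    rw [← Real.rpow_mul hA0.le] at h2
    have h3 : 2 / κ * (κ / 2) = 1 := by field_simp
    rwa [h3, Real.rpow_one] at h2
  obtain ⟨O, hO, hcard, hnear⟩ := hε (ε / M) (div_pos h0 hM0)
    ((div_le_self h0.le hM).trans_lt hlt₁)
  obtain ⟨x, hx⟩ := Finset.card_pos.1 hO.card_pos
  have hper : f^[n * O.card] x = x := by
    rw [Function.iterate_mul]
    exact hO.iterate_card hx
  obtain ⟨P, hP, hPcard, hPmem⟩ := exists_periodicOrbit (Nat.mul_pos hn hO.card_pos) hper
  refine ⟨P, hP, ?_, fun y hy => ?_⟩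
  · have h1 : (P.card : ℝ) ≤ n * O.card := by exact_mod_cast hPcard
    calc (P.card : ℝ) ≤ n * O.card := h1
      _ < n * (1 / (ε / M)) ^ (κ / 2) := by gcongr
      _ = A * (1 / ε) ^ (κ / 2) := by
        rw [hA, mul_assoc, ← Real.mul_rpow hM0.le (by positivity)]
        congr 2
        field_simp
      _ < (1 / ε) ^ (κ / 2) * (1 / ε) ^ (κ / 2) := by gcongr
      _ = (1 / ε) ^ κ := by
        rw [← Real.rpow_add (by positivity), add_halves]
  · obtain ⟨i, -, rfl⟩ := hPmem y hy
    have hi : f^[i] x = f^[i % n] ((f^[n])^[i / n] x) := by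
      rw [← Function.iterate_mul, ← Function.iterate_add_apply, Nat.mod_add_div]
    obtain ⟨w, hw, hdist⟩ := (infDist_lt_iff hne).1 (hnear _ (hO.iterate_mem hx (i / n)))
    rw [hi, infDist_lt_iff hne]
    refine ⟨f^[i % n] w, hmaps.iterate _ hw, ?_⟩
    calc _ ≤ M * _ := hLM _ (Nat.mod_lt _ hn).le _ _
      _ < M * (ε / M) := by gcongr
      _ = ε := by field_simp

lemma BQShadowing.iterate {X : Type*} [MetricSpace X] [CompactSpace X] {f : X → X}
    (hLip : ∃ C : NNReal, LipschitzWith C f) {n : ℕ} (hn : 0 < n)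
    (h : BQShadowing f) : BQShadowing (f^[n]) := by
  intro K₀ hne₀ hK₀ hinv₀ κ hκ
  obtain ⟨M, hM, hLM⟩ := exists_common_lipschitz hLip n
  have hM0 : 0 < M := one_pos.trans_le hM
  have hf : Continuous f := hLip.elim fun _ hC => hC.continuous
  obtain ⟨K, hKK₀, hne, hK, hinv, hmin⟩ :=
    exists_minimal_invariant f^[n] hne₀ hK₀ (mapsTo_iff_image_subset.2 hinv₀)
  set U : Set X := ⋃ j : Fin n, f^[j] '' K with hU
  have hUne : U.Nonempty := by
    obtain ⟨x, hx⟩ := hne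
    exact ⟨x, mem_iUnion.2 ⟨⟨0, hn⟩, x, hx, rfl⟩⟩
  have hUc : IsCompact U := isCompact_iUnion fun j => hK.image (hf.iterate j)
  have hUinv : f '' U ⊆ U := by
    rintro _ ⟨_, hy, rfl⟩
    obtain ⟨⟨j, hj⟩, x, hx, rfl⟩ := mem_iUnion.1 hy
    have hstep : f (f^[j] x) = f^[j + 1] x := (Function.iterate_succ_apply' f j x).symm
    change f (f^[j] x) ∈ U
    rw [hstep]
    rcases Nat.lt_or_ge (j + 1) n with hlt | hge
    · exact mem_iUnion.2 ⟨⟨j + 1, hlt⟩, x, hx, rfl⟩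
    · obtain rfl : j + 1 = n := by omega
      exact mem_iUnion.2 ⟨⟨0, hn⟩, _, hinv hx, rfl⟩
  -- `V` is the union of the images not contained in `K`; it has positive distance from `K`.
  set V : Set X := ⋃ j : {j : Fin n // Disjoint K (f^[j] '' K)}, f^[j.1] '' K with hV
  have hVc : IsCompact V := isCompact_iUnion fun j => hK.image (hf.iterate _)
  have hKV : Disjoint K V := disjoint_iUnion_right.2 fun j => j.2
  have hUV : U ⊆ K ∪ V := by
    refine iUnion_subset fun j => ?_
    rcases minimal_image_dichotomy hf hK hinv hmin j with hs | hd
    · exact hs.trans subset_union_left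
    · exact (subset_iUnion (fun j : {j : Fin n // Disjoint K (f^[j] '' K)} => f^[j.1] '' K)
        ⟨j, hd⟩).trans subset_union_right
  obtain ⟨δ, hδ, hdisj⟩ := hKV.exists_thickenings hK hVc.isClosed
  obtain ⟨ε₁, hε₁, hε⟩ := h U hUne hUc hUinv κ hκ
  refine ⟨min ε₁ (δ / M), lt_min hε₁ (by positivity), fun ε h0 hlt => ?_⟩
  obtain ⟨hlt₁, hlt₂⟩ := lt_min_iff.1 hlt
  have hMε : M * ε < δ := by
    rw [lt_div_iff₀ hM0] at hlt₂
    linarith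
  have hεδ : ε < δ := (le_mul_of_one_le_left h0.le hM).trans_lt hMε
  obtain ⟨O, hO, hcard, hnear⟩ := hε ε h0 hlt₁
  have key : ∀ z ∈ O, (∃ w ∈ K, dist z w < M * ε) → ∃ w ∈ K, dist z w < ε := by
    rintro z hz ⟨w, hw, hzw⟩
    obtain ⟨v, hv, hzv⟩ := (infDist_lt_iff hUne).1 (hnear z hz)
    rcases hUV hv with hvK | hvV
    · exact ⟨v, hvK, hzv⟩
    · exact (Set.disjoint_left.1 hdisj (mem_thickening_iff.2 ⟨w, hw, hzw.trans hMε⟩)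
        (mem_thickening_iff.2 ⟨v, hvV, hzv.trans hεδ⟩)).elim
  have hlip : ∀ j ≤ n, ∀ y w, dist y w < ε → dist (f^[j] y) (f^[j] w) < M * ε :=
    fun j hj y w hyw => (hLM j hj y w).trans_lt (by gcongr)
  obtain ⟨z, hzO, hz⟩ : ∃ z ∈ O, ∃ w ∈ K, dist z w < ε := by
    obtain ⟨y, hy⟩ := Finset.card_pos.1 hO.card_pos
    obtain ⟨v, hv, hyv⟩ := (infDist_lt_iff hUne).1 (hnear y hy)
    obtain ⟨⟨j, hj⟩, w, hw, rfl⟩ := mem_iUnion.1 hv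
    -- `n - j` further steps take `f^[j] '' K` into `f^[n] '' K ⊆ K`.
    refine ⟨f^[n - j] y, hO.iterate_mem hy _, key _ (hO.iterate_mem hy _) ⟨f^[n] w, hinv hw, ?_⟩⟩
    have h1 := hlip (n - j) (Nat.sub_le _ _) _ _ hyv
    simp only [← Function.iterate_add_apply, Nat.sub_add_cancel hj.le] at h1
    exact h1
  have hFO : ∀ i, (f^[n])^[i] z ∈ O := fun i => by
    rw [← Function.iterate_mul]
    exact hO.iterate_mem hzO _
  have hall : ∀ i, ∃ w ∈ K, dist ((f^[n])^[i] z) w < ε := by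
    intro i
    induction i with
    | zero => exact hz
    | succ i ih =>
      obtain ⟨w, hw, hd⟩ := ih
      refine key _ (hFO _) ⟨f^[n] w, hinv hw, ?_⟩
      rw [Function.iterate_succ_apply']
      exact hlip n le_rfl _ _ hd
  have hper : (f^[n])^[O.card] z = z := by
    rw [← Function.iterate_mul, mul_comm, Function.iterate_mul]
    exact Function.iterate_fixed (hO.iterate_card hzO) n
  obtain ⟨P, hP, hPcard, hPmem⟩ := exists_periodicOrbit hO.card_pos hper
  refine ⟨P, hP, lt_of_le_of_lt (by exact_mod_cast hPcard) hcard, fun y hy => ?_⟩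
  obtain ⟨i, -, rfl⟩ := hPmem y hy
  obtain ⟨w, hw, hd⟩ := hall i
  exact (infDist_lt_iff hne₀).2 ⟨w, hKK₀ hw, hd⟩

end ErgOpt

open ErgOpt

/-- Let `f : X → X` be Lipschitz on a compact metric space `(X, d)` and
let `n ≥ 1`, `F := f^[n]`. Then `(X, f)` has the Bressaud–Quas shadowing property if and
only if `(X, F)` does. -/
theorem bq_shadowing_iterate_iff
    {X : Type*} [MetricSpace X] [CompactSpace X]
    (f : X → X) (hLip : ∃ C : NNReal, LipschitzWith C f) (n : ℕ) (hn : 0 < n) :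
    BQShadowing f ↔ BQShadowing (f^[n]) :=
  ⟨fun h => h.iterate hLip hn, fun h => bqShadowing_of_iterate hLip hn h⟩
end
end

section
/- Let (Σ_A^+, σ_A) be a one-sided subshift of finite type defined by a transition matrix A : S × S → {0,1} on a finite nonempty set S, and equip Σ_A^+ with the metric d_θ for some θ ∈ (0,1). Then (Σ_A^+, σ_A) has the Bressaud–Quas shadowing property: for every nonempty compact set K ⊆ Σ_A^+ with σ_A(K) ⊆ K and every κ > 0, there exists ε₀ > 0 such that for each ε ∈ (0, ε₀) there exists a periodic orbit of σ_A of period p < (1/ε)^κ contained entirely in the open ε-neighborhood of K. -/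
/-!
Passing to words, the theorem asks for a periodic sequence of period `e^{o(k)}` all of whose words
of length `k + 1` occur in `K`.

Let `w n` be the number of words of length `n` occurring in `K`, and consider the digraph on the
words of length `k` with an edge `u → v` when the concatenation `uv` occurs in `K`. Cutting a point
of `K` into blocks of length `k` gives a walk in this digraph, and conversely concatenating the
vertices of a closed walk with `q` vertices gives a periodic sequence of period `q * k` all of whose
words of length `k + 1` occur in `K`, since such a word lies inside some `uv`.

If there is no closed walk with at most `m` vertices, then the `m` vertices of a walk are distinct
and the set of these vertices determines the walk (a finite acyclic digraph has at most one
Hamiltonian path). Hence `w (m * k) ≤ (w k).choose m ≤ (w k) ^ m / m!`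
(`ncard_words_mul_le_choose`). By Fekete's lemma `log (w n) / n` converges to its infimum `h`, so
`e^{h m k} ≤ w (m * k)` while `w k ≤ e^{(h + δ) k}` for large `k`. Together these give
`m! ≤ e^{δ k m}`, which fails as soon as `m > e^{2 δ k}` and `δ k ≥ 1`
(`eventually_exists_choose_lt`). So there is a closed walk with at most about `e^{2 δ k}` vertices.
-/

open Metric Set

noncomputable section

open ErgOpt

namespace BQ

open Filter Topology

/-! ### Words and the block digraph -/

variable {S : Type*}

/-- The words of length `n` occurring at position `0` in some point of `K`. For a shift-invariant
`K` these are all the words of length `n` occurring in `K`. -/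
def words (K : Set (ℕ → S)) (n : ℕ) : Set (Fin n → S) :=
  (fun x (i : Fin n) => x i) '' K

/-- The edge relation of the block digraph: the concatenation `uv` is an initial word of a point
of `K`. -/
def Follows (K : Set (ℕ → S)) (k : ℕ) (u v : Fin k → S) : Prop :=
  ∃ x ∈ K, (∀ i : Fin k, u i = x i) ∧ ∀ i : Fin k, v i = x (i + k)

/-- The `i`-th block of length `k` of the sequence `x`. -/
def block (k : ℕ) (x : ℕ → S) (i : ℕ) : Fin k → S := fun j => x (j + k * i)

lemma shift_mem {K : Set (ℕ → S)} (hK : ∀ x ∈ K, (fun i => x (i + 1)) ∈ K) {x : ℕ → S}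
    (hx : x ∈ K) (n : ℕ) : (fun i => x (i + n)) ∈ K := by
  induction n with
  | zero => simpa using hx
  | succ n ih =>
    have := hK _ ih
    simpa [add_assoc, add_comm 1 n] using this

lemma follows_block {K : Set (ℕ → S)} (hK : ∀ x ∈ K, (fun i => x (i + 1)) ∈ K) {x : ℕ → S}
    (hx : x ∈ K) (k i : ℕ) : Follows K k (block k x i) (block k x (i + 1)) := by
  refine ⟨_, shift_mem hK hx (k * i), fun j => rfl, fun j => ?_⟩
  simp only [block]
  congr 1
  ring

lemma block_mem_words {K : Set (ℕ → S)} (hK : ∀ x ∈ K, (fun i => x (i + 1)) ∈ K) {x : ℕ → S}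
    (hx : x ∈ K) (k i : ℕ) : block k x i ∈ words K k :=
  ⟨_, shift_mem hK hx (k * i), rfl⟩

lemma ncard_words_add_le [Finite S] {K : Set (ℕ → S)}
    (hK : ∀ x ∈ K, (fun i => x (i + 1)) ∈ K) (a b : ℕ) :
    (words K (a + b)).ncard ≤ (words K a).ncard * (words K b).ncard := by
  rw [← Set.ncard_prod]
  refine Set.ncard_le_ncard_of_injOn
    (fun w => (fun i => w (Fin.castAdd b i), fun i => w (Fin.natAdd a i))) ?_ ?_ (Set.toFinite _)
  · rintro _ ⟨x, hx, rfl⟩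
    refine ⟨⟨x, hx, rfl⟩, ⟨_, shift_mem hK hx a, ?_⟩⟩
    funext i
    simp [add_comm]
  · intro w _ w' _ h
    simp only [Prod.mk.injEq] at h
    funext i
    refine Fin.addCases (fun i => ?_) (fun i => ?_) i
    · exact congrFun h.1 i
    · exact congrFun h.2 i

lemma eq_id_of_lt_succ {m : ℕ} (a : Fin m → Fin m)
    (h : ∀ i j : Fin m, (j : ℕ) = i + 1 → a i < a j) : a = id := by
  have hs : StrictMono a := by
    cases m with
    | zero => exact fun i => i.elim0
    | succ n => exact Fin.strictMono_iff_lt_succ.2 fun i => h _ _ (by simp)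
  refine (hs.range_inj strictMono_id).1 ?_
  rw [Set.range_id, (Finite.injective_iff_surjective.1 hs.injective).range_eq]

/-- If no walk `f` has an edge from `f a` back to `f b` with `b ≤ a < m`, then the walks with `m`
vertices coming from `K` are injective and determined by their vertex sets. -/
lemma ncard_words_mul_le_choose [Finite S] {K : Set (ℕ → S)}
    (hK : ∀ x ∈ K, (fun i => x (i + 1)) ∈ K) (k m : ℕ)
    (hno : ∀ f : ℕ → Fin k → S, (∀ i, Follows K k (f i) (f (i + 1))) →
      ∀ b a, b ≤ a → a < m → ¬ Follows K k (f a) (f b)) :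
    (words K (m * k)).ncard ≤ (words K k).ncard.choose m := by
  classical
  have hfin : (words K k).Finite := Set.toFinite _
  rw [Set.ncard_eq_toFinset_card _ hfin, ← Finset.card_powersetCard, ← Set.ncard_coe_finset]
  refine Set.ncard_le_ncard_of_injOn
    (fun w => Finset.univ.image fun (i : Fin m) (j : Fin k) => w (finProdFinEquiv (i, j)))
    ?_ ?_ (Set.toFinite _)
  · rintro _ ⟨x, hx, rfl⟩
    rw [Finset.mem_coe, Finset.mem_powersetCard]
    constructor
    · intro u hu
      obtain ⟨i, -, rfl⟩ := Finset.mem_image.1 hu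
      exact hfin.mem_toFinset.2 (block_mem_words hK hx k i)
    · rw [Finset.card_image_of_injective, Finset.card_univ, Fintype.card_fin]
      -- If `f b = f a` with `b < a`, the edge into `f a` from its predecessor goes back to `f b`.
      have key : ∀ b a : ℕ, b < a → a < m → block k x b ≠ block k x a := by
        intro b a hba ham he
        obtain ⟨a', rfl⟩ : ∃ a', a = a' + 1 := ⟨a - 1, by omega⟩
        refine hno _ (follows_block hK hx k) b a' (by omega) (by omega) ?_
        rw [he]
        exact follows_block hK hx k a'
      intro i j hij
      rcases lt_trichotomy (i : ℕ) j with h | h | h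
      · exact absurd hij (key _ _ h j.2)
      · exact Fin.ext h
      · exact absurd hij.symm (key _ _ h i.2)
  · rintro _ ⟨x, hx, rfl⟩ _ ⟨y, hy, rfl⟩ hxy
    replace hxy : (Finset.univ.image fun i : Fin m => block k x i) =
        Finset.univ.image fun i : Fin m => block k y i := hxy
    have hex : ∀ i : Fin m, ∃ a : Fin m, block k x a = block k y i := by
      intro i
      have hi : block k y i ∈ Finset.univ.image fun i : Fin m => block k x i := by
        rw [hxy]
        exact Finset.mem_image_of_mem _ (Finset.mem_univ i)
      obtain ⟨a, -, ha⟩ := Finset.mem_image.1 hi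
      exact ⟨a, ha⟩
    choose a ha using hex
    have hid : a = id := by
      refine eq_id_of_lt_succ a fun i j hij => ?_
      by_contra hlt
      refine hno _ (follows_block hK hx k) (a j) (a i) (not_lt.1 hlt) (a i).2 ?_
      rw [ha, ha, hij]
      exact follows_block hK hy k i
    funext n
    obtain ⟨⟨i, j⟩, rfl⟩ := finProdFinEquiv.surjective n
    have := congrFun (ha i) j
    rw [hid] at this
    exact this

/-! ### From closed walks to periodic sequences -/

/-- Concatenating the vertices of a closed walk with `q` vertices gives a `q * k`-periodic
sequence; each of its words of length `k + 1` lies inside two consecutive blocks, hence occurs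
in `K`. -/
lemma exists_periodic_of_cycle {K : Set (ℕ → S)} (hK : ∀ x ∈ K, (fun i => x (i + 1)) ∈ K)
    {k q : ℕ} (hk : 0 < k) (c : ℕ → Fin k → S) (hc : ∀ i, Follows K k (c i) (c (i + 1)))
    (hq : ∀ i, c (i + q) = c i) :
    ∃ y : ℕ → S, (∀ n, y (n + q * k) = y n) ∧ ∀ n, ∃ x ∈ K, ∀ j ≤ k, y (n + j) = x j := by
  let y : ℕ → S := fun n => c (n / k) ⟨n % k, Nat.mod_lt _ hk⟩
  have hy : ∀ (i r : ℕ) (hr : r < k), y (k * i + r) = c i ⟨r, hr⟩ := by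
    intro i r hr
    have h1 : (k * i + r) / k = i := by
      rw [Nat.mul_add_div hk, Nat.div_eq_of_lt hr, add_zero]
    have h2 : (k * i + r) % k = r := by rw [Nat.mul_add_mod, Nat.mod_eq_of_lt hr]
    simp only [y, h1, h2]
  refine ⟨y, fun n => ?_, fun n => ?_⟩
  · simp only [y, Nat.add_mul_div_right _ _ hk, Nat.add_mul_mod_self_right, hq]
  · obtain ⟨x, hx, h1, h2⟩ := hc (n / k)
    refine ⟨_, shift_mem hK hx (n % k), fun j hj => ?_⟩
    have hr := Nat.mod_lt n hk
    have hn := Nat.div_add_mod n k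
    rcases lt_or_ge (n % k + j) k with hlt | hge
    · have e : n + j = k * (n / k) + (n % k + j) := by omega
      rw [e, hy _ _ hlt, h1, add_comm j]
    · have e : n + j = k * (n / k + 1) + (n % k + j - k) := by rw [mul_add]; omega
      rw [e, hy _ _ (by omega), h2]
      congr 1
      simp only
      omega

/-- A walk `f` with an edge from `f a` back to `f b` closes up to a cycle with `a - b + 1`
vertices. -/
lemma exists_cycle {K : Set (ℕ → S)} {k : ℕ} (f : ℕ → Fin k → S)
    (hf : ∀ i, Follows K k (f i) (f (i + 1))) {a b : ℕ} (hab : Follows K k (f a) (f b))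
    (hba : b ≤ a) :
    ∃ c : ℕ → Fin k → S, (∀ i, Follows K k (c i) (c (i + 1))) ∧
      ∀ i, c (i + (a - b + 1)) = c i := by
  refine ⟨fun i => f (b + i % (a - b + 1)), fun i => ?_, fun i => by simp⟩
  have hlt : i % (a - b + 1) < a - b + 1 := Nat.mod_lt _ (by omega)
  simp only [Nat.add_mod i 1]
  rcases Nat.lt_or_ge (i % (a - b + 1)) (a - b) with h | h
  · have e : (i % (a - b + 1) + 1 % (a - b + 1)) % (a - b + 1) = i % (a - b + 1) + 1 := by
      rw [Nat.mod_eq_of_lt (a := 1) (by omega), Nat.mod_eq_of_lt (by omega)]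
    rw [e, ← add_assoc]
    exact hf _
  · have e0 : i % (a - b + 1) = a - b := by omega
    have e : (i % (a - b + 1) + 1 % (a - b + 1)) % (a - b + 1) = 0 := by
      rw [e0, Nat.add_mod_mod, Nat.mod_self]
    rw [e, e0, Nat.add_sub_cancel' hba]
    exact hab

/-! ### Counting words -/

/-- The length `m` of walks is chosen just above `exp (c * k / 2)`: short enough for the period
bound, and long enough for `m !` to beat the gap between `w k` and its growth rate. -/
lemma eventually_exists_choose_lt [Finite S] {K : Set (ℕ → S)} (hne : K.Nonempty)
    (hK : ∀ x ∈ K, (fun i => x (i + 1)) ∈ K) {c : ℝ} (hc : 0 < c) :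
    ∀ᶠ k : ℕ in atTop, ∃ m : ℕ, (m * k : ℝ) < Real.exp (c * k) ∧
      (words K k).ncard.choose m < (words K (m * k)).ncard := by
  have hpos : ∀ n, 0 < (words K n).ncard := fun n =>
    (Set.ncard_pos (Set.toFinite _)).2 (hne.image _)
  have hposR : ∀ n, (0 : ℝ) < (words K n).ncard := fun n => Nat.cast_pos.2 (hpos n)
  set u : ℕ → ℝ := fun n => Real.log (words K n).ncard with hu
  have hsub : Subadditive u := by
    intro a b
    simp only [hu]
    rw [← Real.log_mul (hposR a).ne' (hposR b).ne']
    exact Real.log_le_log (hposR _) (by exact_mod_cast ncard_words_add_le hK a b)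
  have hbdd : BddBelow (Set.range fun n : ℕ => u n / n) := by
    refine ⟨0, ?_⟩
    rintro _ ⟨n, rfl⟩
    exact div_nonneg (Real.log_natCast_nonneg _) (Nat.cast_nonneg _)
  set δ : ℝ := c / 4 with hδ
  have hδ0 : 0 < δ := by positivity
  have hc4 : c = 4 * δ := by rw [hδ]; ring
  have h1 : ∀ᶠ k : ℕ in atTop, u k / k < hsub.lim + δ :=
    (hsub.tendsto_lim hbdd).eventually (gt_mem_nhds (by linarith))
  have h2 : ∀ᶠ k : ℕ in atTop, 1 / δ ≤ (k : ℝ) :=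
    tendsto_natCast_atTop_atTop.eventually (eventually_ge_atTop _)
  have h3 : ∀ᶠ k : ℕ in atTop, 2 / δ ^ 2 < (k : ℝ) :=
    tendsto_natCast_atTop_atTop.eventually (eventually_gt_atTop _)
  filter_upwards [h1, h2, h3, eventually_gt_atTop 0] with k h1 h2 h3 hk0
  have hkR : (0 : ℝ) < k := Nat.cast_pos.2 hk0
  have hδk : 1 ≤ δ * k := by rw [div_le_iff₀ hδ0] at h2; linarith
  have h2k : 2 * (k : ℝ) < Real.exp (2 * δ * k) := by
    have := Real.quadratic_le_exp_of_nonneg (x := 2 * δ * k) (by positivity)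
    rw [div_lt_iff₀ (by positivity)] at h3
    nlinarith
  set E : ℝ := Real.exp (2 * δ * k) with hE
  have hE1 : 1 ≤ E := Real.one_le_exp (by positivity)
  set m : ℕ := ⌊E⌋₊ + 1 with hm
  have hmE : E < m := by rw [hm]; exact_mod_cast Nat.lt_floor_add_one E
  have hm2 : (m : ℝ) ≤ 2 * E := by
    have := Nat.floor_le (zero_le_one.trans hE1)
    rw [hm]; push_cast; linarith
  have hm0 : (0 : ℝ) < m := by linarith
  refine ⟨m, ?_, ?_⟩
  · have : Real.exp (c * k) = E * E := by rw [hE, ← Real.exp_add, hc4]; congr 1; ring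
    rw [this]
    nlinarith
  · by_contra! hle
    have hfac : (0 : ℝ) < (m.factorial : ℝ) := Nat.cast_pos.2 m.factorial_pos
    have hle' : ((words K (m * k)).ncard : ℝ) ≤ ((words K k).ncard : ℝ) ^ m / m.factorial :=
      (Nat.cast_le.2 hle).trans (Nat.choose_le_pow_div m _)
    have hlog : u (m * k) ≤ m * u k - Real.log m.factorial := by
      have := Real.log_le_log (hposR _) hle'
      rwa [Real.log_div (pow_pos (hposR k) m).ne' hfac.ne', Real.log_pow] at this
    have hlow : hsub.lim * (m * k) ≤ u (m * k) := by
      have := hsub.lim_le_div hbdd (n := m * k) (Nat.mul_ne_zero (by omega) hk0.ne')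
      rw [le_div_iff₀ (by push_cast; positivity)] at this
      push_cast at this
      exact this
    have hup : u k < (hsub.lim + δ) * k := (div_lt_iff₀ hkR).1 h1
    have hstir : m * Real.log m - Real.log m.factorial ≤ m := by
      have := Real.log_le_log (by positivity) (Real.pow_div_factorial_le_exp (x := m) hm0.le m)
      rwa [Real.log_div (pow_pos hm0 m).ne' hfac.ne', Real.log_pow, Real.log_exp] at this
    have hlogm : 2 * δ * k < Real.log m := (Real.lt_log_iff_exp_lt hm0).2 hmE
    have h4 : m * Real.log m < m * (δ * k + 1) := by nlinarith
    have h5 := lt_of_mul_lt_mul_left h4 hm0.le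
    nlinarith

/-! ### Periodic orbits -/

/-- A periodic point spans a periodic orbit whose cardinality is its minimal period. -/
lemma exists_isPeriodicOrbit {X : Type*} (T : X → X) {x : X} {n : ℕ} (hn : 0 < n)
    (hx : T^[n] x = x) :
    ∃ O : Finset X, ErgOpt.IsPeriodicOrbit T O ∧ O.card ≤ n ∧ ∀ y ∈ O, ∃ i, T^[i] x = y := by
  classical
  have hp : Function.IsPeriodicPt T n x := hx
  have hcard : ((Finset.range (Function.minimalPeriod T x)).image (T^[·] x)).card =
      Function.minimalPeriod T x := by
    rw [Finset.card_image_of_injOn, Finset.card_range]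
    simpa using! Function.iterate_injOn_Iio_minimalPeriod (f := T) (x := x)
  refine ⟨(Finset.range (Function.minimalPeriod T x)).image (T^[·] x),
    ⟨x, ?_, ?_, fun y => ?_⟩, ?_, fun y hy => ?_⟩
  · exact Finset.mem_image.2 ⟨0, Finset.mem_range.2 (hp.minimalPeriod_pos hn), rfl⟩
  · rw [hcard]; exact Function.iterate_minimalPeriod
  · rw [hcard]; simp
  · rw [hcard]; exact hp.minimalPeriod_le hn
  · obtain ⟨i, -, hi⟩ := Finset.mem_image.1 hy
    exact ⟨i, hi⟩

end BQ

/-- **Bressaud–Quas closing lemma for subshifts of finite type.**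
Let `S` be a finite nonempty set, `A` a transition matrix on `S`, and equip the
one-sided subshift of finite type `Σ_A^+ = { x : ℕ → S // ∀ i, A (x i) (x (i+1)) }`
with the metric `d_θ` for some `θ ∈ (0,1)`, i.e. a metric whose distance between two
distinct admissible sequences `x ≠ y` is `θ^N`, where `N` is the smallest index at
which they differ. Then the left shift `σ_A` on `Σ_A^+` has the Bressaud–Quas
shadowing property. -/
theorem bq_shadowing_subshift
    {S : Type*} [Fintype S] [Nonempty S] (A : S → S → Prop)
    (θ : ℝ) (hθ0 : 0 < θ) (hθ1 : θ < 1)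
    [m : MetricSpace { x : ℕ → S // ∀ i : ℕ, A (x i) (x (i + 1)) }]
    (hdist : ∀ x y : { x : ℕ → S // ∀ i : ℕ, A (x i) (x (i + 1)) },
      x ≠ y → dist x y = θ ^ sInf {n : ℕ | x.1 n ≠ y.1 n}) :
    BQShadowing
      (fun x : { x : ℕ → S // ∀ i : ℕ, A (x i) (x (i + 1)) } =>
        ⟨fun i => x.1 (i + 1), fun i => x.2 (i + 1)⟩) := by
  intro K hne _ hinv κ hκ
  set T := (fun x : { x : ℕ → S // ∀ i : ℕ, A (x i) (x (i + 1)) } =>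
    (⟨fun i => x.1 (i + 1), fun i => x.2 (i + 1)⟩ :
      { x : ℕ → S // ∀ i : ℕ, A (x i) (x (i + 1)) })) with hT
  have hiter : ∀ n x i, (T^[n] x).1 i = x.1 (i + n) := by
    intro n
    induction n with
    | zero => intro x i; rfl
    | succ n ih =>
      intro x i
      rw [Function.iterate_succ_apply, ih]
      simp only [hT, add_assoc]
  set L : Set (ℕ → S) := Subtype.val '' K with hL
  have hLinv : ∀ x ∈ L, (fun i => x (i + 1)) ∈ L := by
    rintro _ ⟨x, hx, rfl⟩
    exact ⟨T x, hinv ⟨x, hx, rfl⟩, rfl⟩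
  have hlogθ : 0 < -Real.log θ := neg_pos.2 (Real.log_neg hθ0 hθ1)
  have hc : 0 < κ * -Real.log θ := mul_pos hκ hlogθ
  obtain ⟨k₀, hk₀⟩ := Filter.eventually_atTop.1
    (BQ.eventually_exists_choose_lt (hne.image _) hLinv hc)
  refine ⟨θ ^ (k₀ + 1), pow_pos hθ0 _, fun ε hε hε₀ => ?_⟩
  -- The scale `k` is determined by `θ ^ (k + 1) < ε ≤ θ ^ k`.
  have hex : ∃ n : ℕ, θ ^ (n + 1) < ε := by
    obtain ⟨n, hn⟩ := exists_pow_lt_of_lt_one hε hθ1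
    exact ⟨n, (pow_le_pow_of_le_one hθ0.le hθ1.le n.le_succ).trans_lt hn⟩
  classical
  obtain ⟨k, hkε, hkmin⟩ : ∃ k : ℕ, θ ^ (k + 1) < ε ∧ ∀ n < k, ε ≤ θ ^ (n + 1) :=
    ⟨Nat.find hex, Nat.find_spec hex, fun n hn => not_lt.1 (Nat.find_min hex hn)⟩
  have hkk₀ : k₀ + 1 ≤ k := by
    by_contra! h
    have := pow_le_pow_of_le_one hθ0.le hθ1.le (show k + 1 ≤ k₀ + 1 by omega)
    linarith
  have hεk : ε ≤ θ ^ k := by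
    have := hkmin (k - 1) (by omega)
    rwa [Nat.sub_add_cancel (by omega)] at this
  have hk : 0 < k := by omega
  obtain ⟨M, hMk, hMchoose⟩ := hk₀ k (by omega)
  obtain ⟨f, hf, b, a, hba, ham, hab⟩ : ∃ f : ℕ → Fin k → S,
      (∀ i, BQ.Follows L k (f i) (f (i + 1))) ∧
        ∃ b a, b ≤ a ∧ a < M ∧ BQ.Follows L k (f a) (f b) := by
    by_contra! hno
    exact absurd (BQ.ncard_words_mul_le_choose hLinv k M hno) (not_le.2 hMchoose)
  obtain ⟨c, hcf, hcq⟩ := BQ.exists_cycle f hf hab hba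
  obtain ⟨y, hyper, hyK⟩ := BQ.exists_periodic_of_cycle hLinv hk c hcf hcq
  have hyA : ∀ i, A (y i) (y (i + 1)) := by
    intro i
    obtain ⟨_, ⟨x, hx, rfl⟩, hxy⟩ := hyK i
    have h0 := hxy 0 (by omega)
    rw [add_zero] at h0
    rw [h0, hxy 1 (by omega)]
    exact x.2 0
  have hTy : T^[(a - b + 1) * k] ⟨y, hyA⟩ = ⟨y, hyA⟩ := by
    apply Subtype.ext
    funext i
    rw [hiter]
    exact hyper i
  obtain ⟨O, hO, hOcard, hOmem⟩ :=
    BQ.exists_isPeriodicOrbit T (Nat.mul_pos (Nat.succ_pos _) hk) hTy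
  refine ⟨O, hO, ?_, fun z hz => ?_⟩
  · have h1 : (O.card : ℝ) ≤ M * k := by
      have : O.card ≤ M * k := hOcard.trans (Nat.mul_le_mul_right k (by omega))
      exact_mod_cast this
    have h2 : Real.exp (κ * -Real.log θ * k) ≤ (1 / ε) ^ κ := by
      rw [Real.rpow_def_of_pos (by positivity), Real.exp_le_exp, one_div, Real.log_inv]
      have := Real.log_le_log hε hεk
      rw [Real.log_pow] at this
      nlinarith
    linarith
  · obtain ⟨n, rfl⟩ := hOmem z hz
    obtain ⟨_, ⟨x, hx, rfl⟩, hxy⟩ := hyK n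
    refine (infDist_le_dist_of_mem hx).trans_lt ?_
    by_cases he : T^[n] ⟨y, hyA⟩ = x
    · rw [he, dist_self]; exact hε
    · rw [hdist _ _ he]
      refine (pow_le_pow_of_le_one hθ0.le hθ1.le ?_).trans_lt hkε
      -- The set of disagreement is nonempty, so its `sInf` is not the junk value `0`.
      refine le_csInf ?_ fun j hj => ?_
      · by_contra hemp
        refine he (Subtype.ext (funext fun i => ?_))
        by_contra hi
        exact hemp ⟨i, hi⟩
      · by_contra! hjk
        refine hj ?_
        rw [hiter, add_comm]
        exact hxy j (by omega)
end
end
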